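/- For every automorphism φ of the free group F₂ there exist a Whitehead automorphism β of type (W1) and a chain φ' of type (C1) or of type (C2) such that for every w ∈ F₂ the element φ(w) is conjugate in F₂ to β(φ'(w)). -/

import Mathlib

noncomputable section

/-- The free group of rank two. -/
abbrev F : Type := FreeGroup (Fin 2)

/-- The generator `a`. -/
def ga : F := FreeGroup.of 0

/-- The generator `b`. -/
def gb : F := FreeGroup.of 1

/-- Build an automorphism of `F` from images of the generators together with
an explicit inverse. -/
def mkAut (x y xi yi : F)
    (h1 : FreeGroup.lift ![xi, yi] x = ga)
    (h2 : FreeGroup.lift ![xi, yi] y = gb)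
    (h3 : FreeGroup.lift ![x, y] xi = ga)
    (h4 : FreeGroup.lift ![x, y] yi = gb) : MulAut F :=
  MonoidHom.toMulEquiv (FreeGroup.lift ![x, y]) (FreeGroup.lift ![xi, yi])
    (by
      ext i
      fin_cases i
      · simpa [ga] using h1
      · simpa [gb] using h2)
    (by
      ext i
      fin_cases i
      · simpa [ga] using h3
      · simpa [gb] using h4)

/-- `σ : a ↦ ab, b ↦ b`. -/
def σ : MulAut F :=
  mkAut (ga * gb) gb (ga * gb⁻¹) gb
    (by simp [ga, gb]) (by simp [ga, gb]) (by simp [ga, gb]) (by simp [ga, gb])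

/-- `τ : a ↦ a, b ↦ ba`. -/
def τ : MulAut F :=
  mkAut ga (gb * ga) ga (gb * ga⁻¹)
    (by simp [ga, gb]) (by simp [ga, gb]) (by simp [ga, gb]) (by simp [ga, gb])

/-- `δ₁ : a ↦ b⁻¹ab, b ↦ b`. -/
def δ₁ : MulAut F :=
  mkAut (gb⁻¹ * ga * gb) gb (gb * ga * gb⁻¹) gb
    (by simp [ga, gb, mul_assoc]) (by simp [ga, gb]) (by simp [ga, gb, mul_assoc]) (by simp [ga, gb])

/-- `δ₂ : a ↦ bab⁻¹, b ↦ b`. -/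
def δ₂ : MulAut F :=
  mkAut (gb * ga * gb⁻¹) gb (gb⁻¹ * ga * gb) gb
    (by simp [ga, gb, mul_assoc]) (by simp [ga, gb]) (by simp [ga, gb, mul_assoc]) (by simp [ga, gb])

/-- `δ₃ : a ↦ a, b ↦ a⁻¹ba`. -/
def δ₃ : MulAut F :=
  mkAut ga (ga⁻¹ * gb * ga) ga (ga * gb * ga⁻¹)
    (by simp [ga, gb]) (by simp [ga, gb, mul_assoc]) (by simp [ga, gb]) (by simp [ga, gb, mul_assoc])

/-- `δ₄ : a ↦ a, b ↦ aba⁻¹`. -/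
def δ₄ : MulAut F :=
  mkAut ga (ga * gb * ga⁻¹) ga (ga⁻¹ * gb * ga)
    (by simp [ga, gb]) (by simp [ga, gb, mul_assoc]) (by simp [ga, gb]) (by simp [ga, gb, mul_assoc])

/-- `π : a ↦ b, b ↦ a⁻¹`. -/
def pi' : MulAut F :=
  mkAut gb ga⁻¹ gb⁻¹ ga
    (by simp [ga, gb]) (by simp [ga, gb]) (by simp [ga, gb]) (by simp [ga, gb])

/-- Word length of (the reduced word representing) an element of `F`. -/
def len (w : F) : ℕ := w.toWord.length

/-- Cyclic length: minimal word length among all conjugates. -/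
def cyclen (w : F) : ℕ := sInf {n | ∃ g : F, len (g * w * g⁻¹) = n}

/-- The chain `τ^{m_k}σ^{l_k}⋯τ^{m_1}σ^{l_1}` of type (C1) determined by the list
`[(l_k, m_k), …, (l_1, m_1)]` of pairs of exponents. -/
def chainC1 (c : List (ℕ × ℕ)) : MulAut F :=
  (c.map fun p => τ ^ p.2 * σ ^ p.1).prod

/-- The chain `τ^{-m_k}σ^{-l_k}⋯τ^{-m_1}σ^{-l_1}` of type (C2) determined by the list
`[(l_k, m_k), …, (l_1, m_1)]` of pairs of exponents. -/
def chainC2 (c : List (ℕ × ℕ)) : MulAut F :=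
  (c.map fun p => (τ ^ p.2)⁻¹ * (σ ^ p.1)⁻¹).prod

/-- Number of factors of `σ` in a chain. -/
def sigmaCount (c : List (ℕ × ℕ)) : ℕ := (c.map Prod.fst).sum

/-- Number of factors of `τ` in a chain. -/
def tauCount (c : List (ℕ × ℕ)) : ℕ := (c.map Prod.snd).sum

/-- The length `Σ (l_i + m_i)` of a chain. -/
def chainLen (c : List (ℕ × ℕ)) : ℕ := sigmaCount c + tauCount c

/-- A Whitehead automorphism of type (W1): it permutes `{a, a⁻¹, b, b⁻¹}`. -/
def IsW1 (β : MulAut F) : Prop :=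
  β ga ∈ ({ga, ga⁻¹, gb, gb⁻¹} : Set F) ∧ β gb ∈ ({ga, ga⁻¹, gb, gb⁻¹} : Set F)

/-- A chain of type (C1). -/
def IsC1 (φ : MulAut F) : Prop := ∃ c : List (ℕ × ℕ), c ≠ [] ∧ φ = chainC1 c

/-- A chain of type (C2). -/
def IsC2 (φ : MulAut F) : Prop := ∃ c : List (ℕ × ℕ), c ≠ [] ∧ φ = chainC2 c

/-- A positive element: a product of the generators `a` and `b`. -/
def IsPositive (w : F) : Prop := w ∈ Submonoid.closure ({ga, gb} : Set F)

/-- The four automorphisms `δ₁, δ₂, δ₃, δ₄`. -/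
def δIdx : Fin 4 → MulAut F := ![δ₁, δ₂, δ₃, δ₄]

/-! ### Cancellation in the free group -/

/-- Length of the longest common prefix of two words. -/
def lcp : List (Fin 2 × Bool) → List (Fin 2 × Bool) → ℕ
  | x :: xs, y :: ys => if x = y then lcp xs ys + 1 else 0
  | _, _ => 0

lemma lcp_ultra (u v w : List (Fin 2 × Bool)) : min (lcp u v) (lcp v w) ≤ lcp u w := by
  induction u generalizing v w with
  | nil => simp [lcp]
  | cons x xs ih =>
    cases v with
    | nil => simp [lcp]
    | cons y ys =>
      cases w with
      | nil => simp [lcp]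
      | cons z zs =>
        have := ih ys zs
        simp only [lcp]
        split_ifs <;> simp_all

lemma lcp_norm (u v : List (Fin 2 × Bool)) (hu : FreeGroup.IsReduced u)
    (hv : FreeGroup.IsReduced v) :
    ((FreeGroup.mk u)⁻¹ * FreeGroup.mk v).norm + 2 * lcp u v = u.length + v.length := by
  induction u generalizing v with
  | nil =>
    rw [FreeGroup.inv_mk, FreeGroup.mul_mk]
    simp [lcp, FreeGroup.norm, hv.reduce_eq]
  | cons x xs ih =>
    cases v with
    | nil =>
      have : (FreeGroup.mk (x :: xs)).norm = (x :: xs).length := by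
        simp only [FreeGroup.norm, FreeGroup.toWord_mk, hu.reduce_eq]
      have h1 : FreeGroup.mk ([] : List (Fin 2 × Bool)) = 1 := rfl
      rw [h1, mul_one, FreeGroup.norm_inv_eq, this]
      simp [lcp]
    | cons y ys =>
      by_cases hxy : x = y
      · subst hxy
        have h := ih ys (List.IsChain.tail hu) (List.IsChain.tail hv)
        have e : ∀ l : List (Fin 2 × Bool),
            FreeGroup.mk (x :: l) = FreeGroup.mk [x] * FreeGroup.mk l := by
          intro l; rw [FreeGroup.mul_mk]; rfl
        have e2 : (FreeGroup.mk (x :: xs))⁻¹ * FreeGroup.mk (x :: ys) =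
            (FreeGroup.mk xs)⁻¹ * FreeGroup.mk ys := by
          rw [e xs, e ys]; group
        rw [e2]
        simp only [lcp, if_true, List.length_cons]
        omega
      · have hr : FreeGroup.IsReduced (FreeGroup.invRev (x :: xs) ++ y :: ys) := by
          have h1 : FreeGroup.IsReduced (FreeGroup.invRev (x :: xs)) := by
            rw [FreeGroup.isReduced_iff_reduce_eq, FreeGroup.reduce_invRev, hu.reduce_eq]
          unfold FreeGroup.IsReduced at *
          rw [List.isChain_append]
          refine ⟨h1, hv, ?_⟩
          intro p hp q hq hpq
          simp [FreeGroup.invRev] at hp hq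
          subst hp hq
          rcases x with ⟨x1, x2⟩
          rcases y with ⟨y1, y2⟩
          simp at hpq hxy ⊢
          subst hpq
          cases x2 <;> cases y2 <;> simp_all
        rw [FreeGroup.inv_mk, FreeGroup.mul_mk]
        simp only [lcp, if_neg hxy, FreeGroup.norm, FreeGroup.toWord_mk, hr.reduce_eq]
        simp

/-- The Gromov product of two elements of `F`. -/
def gp (u v : F) : ℕ := lcp u.toWord v.toWord

lemma gp_spec (u v : F) : (u⁻¹ * v).norm + 2 * gp u v = u.norm + v.norm := by
  have := lcp_norm u.toWord v.toWord FreeGroup.isReduced_toWord FreeGroup.isReduced_toWord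
  rw [FreeGroup.mk_toWord, FreeGroup.mk_toWord] at this
  exact this

lemma gp_ultra (u v w : F) : gp u v ≤ gp u w ∨ gp v w ≤ gp u w := by
  have := lcp_ultra u.toWord v.toWord w.toWord
  unfold gp
  omega

lemma gp_comm (u v : F) : gp u v = gp v u := by
  have h1 := gp_spec u v
  have h2 := gp_spec v u
  have h3 : (u⁻¹ * v).norm = (v⁻¹ * u).norm := by
    rw [← FreeGroup.norm_inv_eq]; congr 1; group
  omega

lemma gp_spec' (u v : F) : (u * v).norm + 2 * gp u⁻¹ v = u.norm + v.norm := by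
  have := gp_spec u⁻¹ v
  simpa [FreeGroup.norm_inv_eq] using this

lemma exists_initial (u : F) (k : ℕ) (hk : k ≤ u.norm) : ∃ q : F, q.norm = k ∧ gp u q = k := by
  have hl : ∀ (l : List (Fin 2 × Bool)) (k : ℕ), k ≤ l.length → lcp l (l.take k) = k := by
    intro l
    induction l with
    | nil => intro k hk; simp at hk; simp [lcp, hk]
    | cons x xs ih =>
      intro k hk
      cases k with
      | zero => simp [lcp]
      | succ k => simp at hk; simp [lcp, ih k hk]
  have hr : FreeGroup.IsReduced (u.toWord.take k) :=
    List.IsChain.take FreeGroup.isReduced_toWord k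
  have e : (FreeGroup.mk (u.toWord.take k)).toWord = u.toWord.take k := by
    rw [FreeGroup.toWord_mk, hr.reduce_eq]
  refine ⟨FreeGroup.mk (u.toWord.take k), ?_, ?_⟩
  · unfold FreeGroup.norm at *
    rw [e]; simp [hk]
  · unfold gp
    rw [e]; exact hl _ _ hk

lemma norm_lt_norm_mul_self (s : F) (hs : s ≠ 1) : s.norm < (s * s).norm := by
  have h := FreeGroup.reduceCyclically.reduce_flatten_replicate_succ
    (FreeGroup.isReduced_toWord (x := s)) 1
  have h0 := FreeGroup.reduceCyclically.conj_conjugator_reduceCyclically s.toWord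
  have h1 : (s * s).toWord = FreeGroup.reduce (List.replicate (1 + 1) s.toWord).flatten := by
    rw [← FreeGroup.toWord_pow, pow_two]
  rw [h] at h1
  have l0 := congrArg List.length h0
  have l1 := congrArg List.length h1
  simp [FreeGroup.invRev_length] at l0 l1
  unfold FreeGroup.norm
  have : (FreeGroup.reduceCyclically s.toWord).length ≠ 0 := by
    intro hh
    have hn := List.length_eq_zero_iff.mp hh
    rw [hn] at h0
    apply hs
    rw [← FreeGroup.mk_toWord (x := s), ← h0]
    rw [List.append_nil, ← FreeGroup.mul_mk, ← FreeGroup.inv_mk, mul_inv_cancel]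
  omega

lemma gp_self_lt (s : F) (hs : s ≠ 1) : 2 * gp s⁻¹ s < s.norm := by
  have := norm_lt_norm_mul_self s hs
  have := gp_spec' s s
  omega

/-! ### Nielsen reduced pairs -/

/-- Two letters which may follow each other in a reduced word. -/
def OkPair (r s : Fin 2 × Bool) : Prop := r.1 = s.1 → r.2 = s.2

lemma nielsen_word (f : Fin 2 × Bool → F)
    (hN : ∀ r s t, OkPair r s → OkPair s t → gp (f r)⁻¹ (f s) + gp (f s)⁻¹ (f t) < (f s).norm)
    (l : List (Fin 2 × Bool)) : ∀ s r, FreeGroup.IsReduced (s :: l) → OkPair r s →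
      gp (f r)⁻¹ (((s :: l).map f).prod) = gp (f r)⁻¹ (f s) ∧
      gp (f r)⁻¹ (f s) + (s :: l).length ≤ (((s :: l).map f).prod).norm := by
  induction l with
  | nil =>
    intro s r _ hrs
    have := hN r s s hrs (fun _ => rfl)
    simp
    omega
  | cons t l ih =>
    intro s r hl hrs
    rw [FreeGroup.isReduced_cons_cons] at hl
    obtain ⟨hst, hl⟩ := hl
    obtain ⟨h1, h2⟩ := ih t s hl hst
    have h3 := hN r s t hrs hst
    rw [List.map_cons, List.prod_cons]
    set w := ((t :: l).map f).prod with hw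
    have h4 := gp_spec' (f s) w
    have h5 := gp_spec (f s) (f s * w)
    rw [inv_mul_cancel_left] at h5
    have h6 := gp_ultra (f r)⁻¹ (f s) (f s * w)
    have h7 := gp_ultra (f r)⁻¹ (f s * w) (f s)
    have h8 := gp_comm (f s) (f s * w)
    simp only [List.length_cons] at h2 ⊢
    omega

lemma nielsen_reduced (f : Fin 2 × Bool → F) (hf : ∀ i b, f (i, !b) = (f (i, b))⁻¹)
    (hne : ∀ r, f r ≠ 1)
    (hmin : ∀ r s : Fin 2 × Bool, r.1 ≠ s.1 → ∀ q : F,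
      (f r).norm + (f s).norm ≤ (q⁻¹ * (f r * f s) * q).norm + (q⁻¹ * f s * q).norm) :
    ∀ r s t, OkPair r s → OkPair s t → gp (f r)⁻¹ (f s) + gp (f s)⁻¹ (f t) < (f s).norm := by
  have hinv : ∀ r : Fin 2 × Bool, f (r.1, !r.2) = (f r)⁻¹ := fun r => hf r.1 r.2
  have hA : ∀ r s : Fin 2 × Bool, r.1 ≠ s.1 → 2 * gp (f r)⁻¹ (f s) ≤ (f s).norm := by
    intro r s hrs
    have h := hmin r s hrs 1
    simp at h
    have := gp_spec' (f r) (f s)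
    omega
  have hB : ∀ r s : Fin 2 × Bool, r.1 ≠ s.1 → 2 * gp (f r)⁻¹ (f s) ≤ (f r).norm := by
    intro r s hrs
    have h := hA (s.1, !s.2) (r.1, !r.2) (by simpa using hrs.symm)
    rw [hinv, hinv, inv_inv, FreeGroup.norm_inv_eq, gp_comm] at h
    exact h
  have hOk : ∀ r s : Fin 2 × Bool, OkPair r s → r.1 ≠ s.1 ∨ r = s := by
    intro r s h
    by_cases e : r.1 = s.1
    · exact Or.inr (Prod.ext e (h e))
    · exact Or.inl e
  intro r s t hrs hst
  have hs := gp_self_lt (f s) (hne s)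
  rcases hOk r s hrs with hrs | rfl
  · rcases hOk s t hst with hst | rfl
    · have a1 := hA r s hrs
      have a2 := hB s t hst
      by_contra hcon
      have b1 : 2 * gp (f r)⁻¹ (f s) = (f s).norm := by omega
      have b2 : 2 * gp (f s)⁻¹ (f t) = (f s).norm := by omega
      have hrt : r.1 = t.1 := by omega
      by_cases hb : r.2 = t.2
      · have : r = t := Prod.ext hrt hb
        subst this
        have hm := hmin r s hrs
        have hxk := hB r s hrs
        set x := f r
        set y := f s
        set k := gp x⁻¹ y with hk
        obtain ⟨q, hq1, hq2⟩ := exists_initial x k (by omega)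
        have hypos : y.norm ≠ 0 := by
          rw [Ne, FreeGroup.norm_eq_zero]; exact hne s
        have e1 : (x * y).norm = x.norm := by
          have := gp_spec' x y
          omega
        have e2 : gp x (x * y) + k = x.norm := by
          have := gp_spec x (x * y)
          rw [inv_mul_cancel_left] at this
          omega
        have e3 : k ≤ gp y⁻¹ (y⁻¹ * x⁻¹) := by
          have := gp_spec y⁻¹ (y⁻¹ * x⁻¹)
          rw [inv_mul_cancel_left, FreeGroup.norm_inv_eq, FreeGroup.norm_inv_eq,
            ← mul_inv_rev, FreeGroup.norm_inv_eq] at this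
          rw [← mul_inv_rev]
          omega
        rw [← mul_inv_rev] at e3
        have c1 : k ≤ gp (x * y) q := by
          have := gp_ultra (x * y) x q
          have := gp_comm (x * y) x
          omega
        have c2 : k ≤ gp y⁻¹ q := by
          have := gp_ultra y⁻¹ x q
          omega
        have c3 : k ≤ gp (x * y)⁻¹ q := by
          have := gp_ultra (x * y)⁻¹ y⁻¹ q
          have := gp_comm (x * y)⁻¹ y⁻¹
          omega
        have d1 : (q⁻¹ * (x * y)).norm + k ≤ x.norm := by
          have := gp_spec q (x * y)
          have := gp_comm q (x * y)
          omega
        have d2 : k ≤ gp (q⁻¹ * (x * y))⁻¹ (x * y)⁻¹ := by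
          have h := gp_spec (q⁻¹ * (x * y))⁻¹ (x * y)⁻¹
          have e : ((q⁻¹ * (x * y))⁻¹⁻¹ * (x * y)⁻¹) = q⁻¹ := by group
          rw [e, FreeGroup.norm_inv_eq, FreeGroup.norm_inv_eq, FreeGroup.norm_inv_eq] at h
          have h' := FreeGroup.norm_mul_le q (q⁻¹ * (x * y))
          rw [mul_inv_cancel_left] at h'
          omega
        have d3 : k ≤ gp (q⁻¹ * (x * y))⁻¹ q := by
          have := gp_ultra (q⁻¹ * (x * y))⁻¹ (x * y)⁻¹ q
          omega
        have d4 := gp_spec' (q⁻¹ * (x * y)) q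
        have d5 : (q⁻¹ * y * q).norm ≤ y.norm := by
          have h1 := gp_spec y⁻¹ q
          rw [inv_inv, FreeGroup.norm_inv_eq] at h1
          have h2 := FreeGroup.norm_mul_le q⁻¹ (y * q)
          rw [FreeGroup.norm_inv_eq, ← mul_assoc] at h2
          omega
        have := hm q
        omega
      · have : t = (r.1, !r.2) := by
          refine Prod.ext hrt.symm ?_
          revert hb
          cases r.2 <;> cases t.2 <;> simp
        rw [this, hinv] at b2
        have := gp_ultra (f s)⁻¹ (f r)⁻¹ (f s)
        omega
    · have := hA r s hrs
      omega
  · rcases hOk r t hst with hst | rfl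
    · have := hB r t hst
      omega
    · omega

/-- The element of `F` given by one letter. -/
def letter (r : Fin 2 × Bool) : F := FreeGroup.mk [r]

lemma letter_inv (i : Fin 2) (b : Bool) : letter (i, !b) = (letter (i, b))⁻¹ := by
  simp [letter, FreeGroup.inv_mk, FreeGroup.invRev]

lemma prod_letters (l : List (Fin 2 × Bool)) : (l.map letter).prod = FreeGroup.mk l := by
  induction l with
  | nil => rfl
  | cons x l ih => rw [List.map_cons, List.prod_cons, ih, letter, FreeGroup.mul_mk]; rfl

lemma letter_mem (r : Fin 2 × Bool) : letter r ∈ ({ga, ga⁻¹, gb, gb⁻¹} : Set F) := by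
  rcases r with ⟨i, b⟩
  have h0 : letter (0, true) = ga := rfl
  have h1 : letter (1, true) = gb := rfl
  cases b
  · have := letter_inv i true
    simp only [Bool.not_true] at this
    rw [this]
    fin_cases i
    · simp [h0]
    · simp [h1]
  · fin_cases i
    · simp [h0]
    · simp [h1]

lemma symm_letter (φ : MulAut F)
    (hmin : ∀ r s : Fin 2 × Bool, r.1 ≠ s.1 → ∀ q : F,
      (φ (letter r)).norm + (φ (letter s)).norm ≤
        (q⁻¹ * (φ (letter r) * φ (letter s)) * q).norm + (q⁻¹ * φ (letter s) * q).norm)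
    (g : F) (hg : g.norm = 1) : φ⁻¹ g ∈ ({ga, ga⁻¹, gb, gb⁻¹} : Set F) := by
  have hN := nielsen_reduced (fun r => φ (letter r))
    (by intro i b; simp [letter_inv])
    (by
      intro r h
      have h : letter r = 1 := by simpa using h
      have := congrArg FreeGroup.toWord h
      simp [letter] at this)
    hmin
  have hw : φ ((φ⁻¹ g)) = g := MulAut.apply_inv_self F φ g
  set w := φ⁻¹ g with hwdef
  have hmk : FreeGroup.mk w.toWord = w := FreeGroup.mk_toWord
  have hred : FreeGroup.IsReduced w.toWord := FreeGroup.isReduced_toWord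
  generalize w.toWord = l at hmk hred
  cases l with
  | nil =>
    have : w = 1 := by rw [← hmk]; rfl
    rw [this, map_one] at hw
    rw [← hw] at hg
    simp at hg
  | cons s l =>
    have h := (nielsen_word _ hN l s s hred (fun _ => rfl)).2
    have e : ((s :: l).map (fun r => φ (letter r))).prod = g := by
      rw [← hw, ← hmk, ← prod_letters, map_list_prod, List.map_map]
      rfl
    rw [e, hg] at h
    have : l = [] := by
      apply List.length_eq_zero_iff.mp
      simp only [List.length_cons] at h
      omega
    subst this
    rw [← hmk]
    exact letter_mem s

lemma isW1_of_inv (φ : MulAut F) (h : IsW1 φ⁻¹) : IsW1 φ := by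
  obtain ⟨h1, h2⟩ := h
  have hab : ga ≠ gb := by
    intro h; have := congrArg FreeGroup.toWord h; simp [ga, gb] at this
  have hab' : ga ≠ gb⁻¹ := by
    intro h; have := congrArg FreeGroup.toWord h
    simp [ga, gb, FreeGroup.toWord_inv, FreeGroup.invRev] at this
  have hab2 : gb ≠ ga⁻¹ := by
    intro h; apply hab'; rw [h, inv_inv]
  have hab3 : ga⁻¹ ≠ gb⁻¹ := fun h => hab (inv_injective h)
  have key : ∀ u, φ⁻¹ u ∈ ({ga, ga⁻¹, gb, gb⁻¹} : Set F) →
      (φ ga = u ∨ φ ga = u⁻¹) ∨ (φ gb = u ∨ φ gb = u⁻¹) := by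
    intro u hu
    have e : φ (φ⁻¹ u) = u := MulAut.apply_inv_self F φ u
    simp only [Set.mem_insert_iff, Set.mem_singleton_iff] at hu
    rcases hu with h | h | h | h <;> rw [h] at e
    · exact Or.inl (Or.inl e)
    · exact Or.inl (Or.inr (by rw [← e, map_inv, inv_inv]))
    · exact Or.inr (Or.inl e)
    · exact Or.inr (Or.inr (by rw [← e, map_inv, inv_inv]))
  unfold IsW1
  simp only [Set.mem_insert_iff, Set.mem_singleton_iff]
  rcases key _ h1 with (k1 | k1) | (k1 | k1) <;> rcases key _ h2 with (k2 | k2) | (k2 | k2) <;>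
    first
    | exact absurd (k1.symm.trans k2) hab
    | exact absurd (k1.symm.trans k2) hab'
    | exact absurd (k2.symm.trans k1) hab2
    | exact absurd (k1.symm.trans k2) hab3
    | (rw [k1, k2]; tauto)

/-! ### The outer automorphism group -/

instance inn_normal : (MulAut.conj : F →* MulAut F).range.Normal := by
  constructor
  rintro _ ⟨g, rfl⟩ φ
  refine ⟨φ g, ?_⟩
  ext x
  simp [MulAut.mul_apply]

/-- The group of outer automorphisms. -/
abbrev OutF : Type := MulAut F ⧸ (MulAut.conj : F →* MulAut F).range

/-- The projection to outer automorphisms. -/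
def pr : MulAut F →* OutF := QuotientGroup.mk' _

lemma pr_eq_iff (x y : MulAut F) : pr x = pr y ↔ ∃ g, y = x * MulAut.conj g := by
  unfold pr
  rw [QuotientGroup.mk'_apply, QuotientGroup.mk'_apply, QuotientGroup.eq]
  constructor
  · rintro ⟨g, hg⟩
    exact ⟨g, by rw [hg, mul_inv_cancel_left]⟩
  · rintro ⟨g, rfl⟩
    exact ⟨g, by rw [inv_mul_cancel_left]⟩

/-- Swap of the generators. -/
def swapP : MulAut F :=
  mkAut gb ga gb ga
    (by simp [ga, gb]) (by simp [ga, gb]) (by simp [ga, gb]) (by simp [ga, gb])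

/-- Inversion of the first generator. -/
def negN : MulAut F :=
  mkAut ga⁻¹ gb ga⁻¹ gb
    (by simp [ga, gb]) (by simp [ga, gb]) (by simp [ga, gb]) (by simp [ga, gb])

lemma aut_ext (x y : MulAut F) (ha : x ga = y ga) (hb : x gb = y gb) : x = y := by
  have : x.toMonoidHom = y.toMonoidHom := by
    ext i
    fin_cases i
    · exact ha
    · exact hb
  ext w
  exact DFunLike.congr_fun this w

lemma sigma_a : σ ga = ga * gb := by simp [σ, mkAut, ga]
lemma sigma_b : σ gb = gb := by simp [σ, mkAut, gb]
lemma tau_a : τ ga = ga := by simp [τ, mkAut, ga]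
lemma tau_b : τ gb = gb * ga := by simp [τ, mkAut, gb]
lemma swap_a : swapP ga = gb := by simp [swapP, mkAut, ga]
lemma swap_b : swapP gb = ga := by simp [swapP, mkAut, gb]
lemma neg_a : negN ga = ga⁻¹ := by simp [negN, mkAut, ga]
lemma neg_b : negN gb = gb := by simp [negN, mkAut, gb]

lemma swap_swap : swapP * swapP = 1 := by
  apply aut_ext <;> simp [MulAut.mul_apply, swap_a, swap_b]
lemma neg_neg' : negN * negN = 1 := by
  apply aut_ext <;> simp [MulAut.mul_apply, neg_a, neg_b]

lemma pp : pr swapP * pr swapP = 1 := by rw [← map_mul, swap_swap, map_one]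
lemma nn : pr negN * pr negN = 1 := by rw [← map_mul, neg_neg', map_one]

lemma psp : pr swapP * pr σ * pr swapP = pr τ := by
  rw [← map_mul, ← map_mul]
  congr 1
  apply aut_ext <;> simp [MulAut.mul_apply, swap_a, swap_b, sigma_a, sigma_b, tau_a, tau_b]

lemma ptp : pr swapP * pr τ * pr swapP = pr σ := by
  rw [← psp]
  simp only [mul_assoc, pp]
  rw [← mul_assoc, pp]; simp

lemma nsn_aux : pr negN * pr σ * pr negN * pr σ = 1 := by
  rw [← map_mul, ← map_mul, ← map_mul, ← map_one pr, pr_eq_iff]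
  refine ⟨gb, ?_⟩
  apply aut_ext <;> simp [MulAut.mul_apply, neg_a, neg_b, sigma_a, sigma_b, mul_assoc]

lemma nsn : pr negN * pr σ * pr negN = (pr σ)⁻¹ := eq_inv_of_mul_eq_one_left nsn_aux

lemma ntn_aux : pr negN * pr τ * pr negN * pr τ = 1 := by
  rw [← map_mul, ← map_mul, ← map_mul, ← map_one pr]
  congr 1
  apply aut_ext <;> simp [MulAut.mul_apply, neg_a, neg_b, tau_a, tau_b]

lemma ntn : pr negN * pr τ * pr negN = (pr τ)⁻¹ := eq_inv_of_mul_eq_one_left ntn_aux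

lemma sigma_inv_a : σ⁻¹ ga = ga * gb⁻¹ := by
  apply σ.injective
  rw [MulAut.apply_inv_self, map_mul, map_inv, sigma_a, sigma_b, mul_inv_cancel_right]
lemma sigma_inv_b : σ⁻¹ gb = gb := by
  apply σ.injective
  rw [MulAut.apply_inv_self, sigma_b]
lemma tau_inv_a : τ⁻¹ ga = ga := by
  apply τ.injective
  rw [MulAut.apply_inv_self, tau_a]
lemma tau_inv_b : τ⁻¹ gb = gb * ga⁻¹ := by
  apply τ.injective
  rw [MulAut.apply_inv_self, map_mul, map_inv, tau_a, tau_b, mul_inv_cancel_right]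

lemma ts_rel : pr τ * (pr σ)⁻¹ = pr swapP * pr negN * (pr τ)⁻¹ := by
  rw [← map_inv, ← map_inv, ← map_mul, ← map_mul, ← map_mul, pr_eq_iff]
  refine ⟨ga, ?_⟩
  apply aut_ext
  · simp only [MulAut.mul_apply, MulAut.conj_apply, map_mul, map_inv, neg_a, neg_b, swap_a, swap_b,
      tau_a, tau_b, sigma_inv_a, sigma_inv_b, tau_inv_a, tau_inv_b]
    group
  · simp only [MulAut.mul_apply, MulAut.conj_apply, map_mul, map_inv, neg_a, neg_b, swap_a, swap_b,
      tau_a, tau_b, sigma_inv_a, sigma_inv_b, tau_inv_a, tau_inv_b]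
    group

/-- Images of the chains of type (C1). -/
def M1 : Submonoid OutF := Submonoid.closure {pr σ, pr τ}

/-- Images of the chains of type (C2). -/
def M2 : Submonoid OutF := Submonoid.closure {(pr σ)⁻¹, (pr τ)⁻¹}

lemma conj_mem {M M' : Submonoid OutF} (x y p : OutF) (hp : p * p = 1)
    (hM : M = Submonoid.closure {x, y}) (hx : p * x * p ∈ M') (hy : p * y * p ∈ M')
    (c : OutF) (hc : c ∈ M) : p * c * p ∈ M' := by
  subst hM
  induction hc using Submonoid.closure_induction with
  | mem z hz =>
    rcases hz with rfl | hz
    · exact hx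
    · rw [Set.mem_singleton_iff] at hz
      subst hz
      exact hy
  | one => rw [mul_one, hp]; exact M'.one_mem
  | mul u v _ _ hu hv =>
    have : p * (u * v) * p = (p * u * p) * (p * v * p) := by
      have : (p * u * p) * (p * v * p) = p * u * (p * p) * v * p := by group
      rw [this, hp]; group
    rw [this]
    exact M'.mul_mem hu hv

lemma s_mem1 : pr σ ∈ M1 := Submonoid.subset_closure (by simp)
lemma t_mem1 : pr τ ∈ M1 := Submonoid.subset_closure (by simp)
lemma s_mem2 : (pr σ)⁻¹ ∈ M2 := Submonoid.subset_closure (by simp)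
lemma t_mem2 : (pr τ)⁻¹ ∈ M2 := Submonoid.subset_closure (by simp)

lemma inv_conj {p x y : OutF} (hp : p * p = 1) (h : p * x * p = y) : p * x⁻¹ * p = y⁻¹ := by
  have : p⁻¹ = p := inv_eq_of_mul_eq_one_left hp
  rw [← h, mul_inv_rev, mul_inv_rev, this, mul_assoc]

lemma conj_p1 (c : OutF) (hc : c ∈ M1) : pr swapP * c * pr swapP ∈ M1 :=
  conj_mem _ _ _ pp rfl (psp ▸ t_mem1) (ptp ▸ s_mem1) c hc
lemma conj_p2 (c : OutF) (hc : c ∈ M2) : pr swapP * c * pr swapP ∈ M2 :=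
  conj_mem _ _ _ pp rfl (inv_conj pp psp ▸ t_mem2) (inv_conj pp ptp ▸ s_mem2) c hc
lemma conj_n1 (c : OutF) (hc : c ∈ M1) : pr negN * c * pr negN ∈ M2 :=
  conj_mem _ _ _ nn rfl (nsn ▸ s_mem2) (ntn ▸ t_mem2) c hc
lemma conj_n2 (c : OutF) (hc : c ∈ M2) : pr negN * c * pr negN ∈ M1 :=
  conj_mem _ _ _ nn rfl
    (by rw [inv_conj nn nsn, inv_inv]; exact s_mem1)
    (by rw [inv_conj nn ntn, inv_inv]; exact t_mem1) c hc

/-- Automorphisms satisfying the conclusion of the theorem. -/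
def Good (x : OutF) : Prop :=
  ∃ β : MulAut F, IsW1 β ∧ ∃ c : OutF, (c ∈ M1 ∨ c ∈ M2) ∧ x = pr β * c

lemma w1_swap {β : MulAut F} (h : IsW1 β) : IsW1 (β * swapP) := by
  unfold IsW1 at *
  rw [MulAut.mul_apply, MulAut.mul_apply, swap_a, swap_b]
  exact h.symm

lemma w1_neg {β : MulAut F} (h : IsW1 β) : IsW1 (β * negN) := by
  unfold IsW1 at *
  rw [MulAut.mul_apply, MulAut.mul_apply, neg_a, neg_b, map_inv]
  refine ⟨?_, h.2⟩
  have := h.1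
  simp only [Set.mem_insert_iff, Set.mem_singleton_iff] at this ⊢
  rcases this with h | h | h | h <;> simp [h]

lemma good_p {x : OutF} (h : Good x) : Good (x * pr swapP) := by
  obtain ⟨β, hβ, c, hc, rfl⟩ := h
  refine ⟨β * swapP, w1_swap hβ, pr swapP * c * pr swapP, hc.imp (conj_p1 c) (conj_p2 c), ?_⟩
  rw [map_mul]
  have : pr β * pr swapP * (pr swapP * c * pr swapP) =
    pr β * (pr swapP * pr swapP) * c * pr swapP := by group
  rw [this, pp, mul_one]

lemma good_n {x : OutF} (h : Good x) : Good (x * pr negN) := by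
  obtain ⟨β, hβ, c, hc, rfl⟩ := h
  refine ⟨β * negN, w1_neg hβ, pr negN * c * pr negN, hc.symm.imp (conj_n2 c) (conj_n1 c), ?_⟩
  rw [map_mul]
  have : pr β * pr negN * (pr negN * c * pr negN) =
    pr β * (pr negN * pr negN) * c * pr negN := by group
  rw [this, nn, mul_one]

lemma good_s {x : OutF} (h : Good x) : Good (x * (pr σ)⁻¹) := by
  obtain ⟨β, hβ, c, hc, rfl⟩ := h
  rcases hc with hc | hc
  · unfold M1 at hc
    induction hc using Submonoid.closure_induction_right with
    | one => exact ⟨β, hβ, (pr σ)⁻¹, Or.inr s_mem2, by simp⟩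
    | mul_right c hc y hy _ =>
      rcases hy with rfl | hy
      · exact ⟨β, hβ, c, Or.inl hc, by group⟩
      · rw [Set.mem_singleton_iff] at hy
        subst hy
        refine ⟨β * swapP * negN, w1_neg (w1_swap hβ),
          pr negN * (pr swapP * c * pr swapP) * pr negN * (pr τ)⁻¹,
          Or.inr (M2.mul_mem (conj_n1 _ (conj_p1 _ hc)) t_mem2), ?_⟩
        have e1 : pr β * (c * pr τ) * (pr σ)⁻¹ = pr β * c * (pr τ * (pr σ)⁻¹) := by group
        rw [e1, ts_rel, map_mul, map_mul]
        have e2 : pr β * pr swapP * pr negN *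
            (pr negN * (pr swapP * c * pr swapP) * pr negN * (pr τ)⁻¹) =
            pr β * pr swapP * (pr negN * pr negN) * pr swapP * c * pr swapP * pr negN *
              (pr τ)⁻¹ := by group
        have e3 : pr β * pr swapP * 1 * pr swapP * c * pr swapP * pr negN * (pr τ)⁻¹ =
            pr β * (pr swapP * pr swapP) * c * pr swapP * pr negN * (pr τ)⁻¹ := by group
        rw [e2, nn, e3, pp]
        group
  · exact ⟨β, hβ, c * (pr σ)⁻¹, Or.inr (M2.mul_mem hc s_mem2), by group⟩

lemma good_closure (ω : MulAut F) (hω : ω ∈ Submonoid.closure {swapP, negN}) {x : OutF}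
    (h : Good x) : Good (x * pr ω) := by
  induction hω using Submonoid.closure_induction_right with
  | one => simpa using h
  | mul_right c _ y hy ih =>
    rw [map_mul, ← mul_assoc]
    rcases hy with rfl | hy
    · exact good_p ih
    · rw [Set.mem_singleton_iff] at hy
      subst hy
      exact good_n ih

lemma chain1 (c : OutF) (hc : c ∈ M1) : ∃ φ', IsC1 φ' ∧ c = pr φ' := by
  unfold M1 at hc
  induction hc using Submonoid.closure_induction_left with
  | one => exact ⟨_, ⟨[(0, 0)], by simp, rfl⟩, by simp [chainC1]⟩
  | mul_left y hy c _ ih =>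
    obtain ⟨_, ⟨l, _, rfl⟩, rfl⟩ := ih
    rcases hy with rfl | hy
    · exact ⟨_, ⟨(1, 0) :: l, by simp, rfl⟩, by simp [chainC1]⟩
    · rw [Set.mem_singleton_iff] at hy
      subst hy
      exact ⟨_, ⟨(0, 1) :: l, by simp, rfl⟩, by simp [chainC1]⟩

lemma chain2 (c : OutF) (hc : c ∈ M2) : ∃ φ', IsC2 φ' ∧ c = pr φ' := by
  unfold M2 at hc
  induction hc using Submonoid.closure_induction_left with
  | one => exact ⟨_, ⟨[(0, 0)], by simp, rfl⟩, by simp [chainC2]⟩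
  | mul_left y hy c _ ih =>
    obtain ⟨_, ⟨l, _, rfl⟩, rfl⟩ := ih
    rcases hy with rfl | hy
    · exact ⟨_, ⟨(1, 0) :: l, by simp, rfl⟩, by simp [chainC2]⟩
    · rw [Set.mem_singleton_iff] at hy
      subst hy
      exact ⟨_, ⟨(0, 1) :: l, by simp, rfl⟩, by simp [chainC2]⟩

lemma exists_omega (r s : Fin 2 × Bool) (hrs : r.1 ≠ s.1) :
    ∃ ω ω' : MulAut F, ω' ∈ Submonoid.closure {swapP, negN} ∧ ω * ω' = 1 ∧
      ω ga = letter r ∧ ω gb = letter s := by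
  have h0 : letter (0, true) = ga := rfl
  have h1 : letter (1, true) = gb := rfl
  have h2 : letter (0, false) = ga⁻¹ := rfl
  have h3 : letter (1, false) = gb⁻¹ := rfl
  have hP : swapP ∈ Submonoid.closure ({swapP, negN} : Set (MulAut F)) :=
    Submonoid.subset_closure (by simp)
  have hN : negN ∈ Submonoid.closure ({swapP, negN} : Set (MulAut F)) :=
    Submonoid.subset_closure (by simp)
  -- a pair of mutually inverse automorphisms may be multiplied by the involutions on the right
  have stepP : ∀ u v : F, (∃ ω ω' : MulAut F, ω' ∈ Submonoid.closure {swapP, negN} ∧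
      ω * ω' = 1 ∧ ω ga = u ∧ ω gb = v) → ∃ ω ω' : MulAut F,
      ω' ∈ Submonoid.closure {swapP, negN} ∧ ω * ω' = 1 ∧ ω ga = v ∧ ω gb = u := by
    rintro u v ⟨ω, ω', h, e, ea, eb⟩
    refine ⟨ω * swapP, swapP * ω', Submonoid.mul_mem _ hP h, ?_, ?_, ?_⟩
    · rw [mul_assoc, ← mul_assoc swapP, swap_swap, one_mul, e]
    · rw [MulAut.mul_apply, swap_a, eb]
    · rw [MulAut.mul_apply, swap_b, ea]
  have stepN : ∀ u v : F, (∃ ω ω' : MulAut F, ω' ∈ Submonoid.closure {swapP, negN} ∧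
      ω * ω' = 1 ∧ ω ga = u ∧ ω gb = v) → ∃ ω ω' : MulAut F,
      ω' ∈ Submonoid.closure {swapP, negN} ∧ ω * ω' = 1 ∧ ω ga = u⁻¹ ∧ ω gb = v := by
    rintro u v ⟨ω, ω', h, e, ea, eb⟩
    refine ⟨ω * negN, negN * ω', Submonoid.mul_mem _ hN h, ?_, ?_, ?_⟩
    · rw [mul_assoc, ← mul_assoc negN, neg_neg', one_mul, e]
    · rw [MulAut.mul_apply, neg_a, map_inv, ea]
    · rw [MulAut.mul_apply, neg_b, eb]
  have base : ∃ ω ω' : MulAut F, ω' ∈ Submonoid.closure {swapP, negN} ∧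
      ω * ω' = 1 ∧ ω ga = ga ∧ ω gb = gb := ⟨1, 1, Submonoid.one_mem _, by simp, rfl, rfl⟩
  have b1 := stepN _ _ base
  have b2 := stepN _ _ (stepP _ _ base)
  have b3 := stepN _ _ (stepP _ _ b1)
  rcases r with ⟨i, x⟩
  rcases s with ⟨j, y⟩
  fin_cases i <;> fin_cases j <;> cases x <;> cases y <;>
    simp only [Fin.mk_one, Fin.zero_eta, h0, h1, h2, h3] <;>
    first
    | exact absurd rfl hrs
    | exact base
    | exact b1
    | exact b2
    | exact b3
    | exact stepP _ _ base
    | exact stepP _ _ b1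
    | exact stepP _ _ b2
    | exact stepP _ _ b3

lemma norm_letters (φ : MulAut F) (r s : Fin 2 × Bool) (hrs : r.1 ≠ s.1) :
    (φ (letter r)).norm + (φ (letter s)).norm = (φ ga).norm + (φ gb).norm := by
  have h : ∀ (i : Fin 2) (b : Bool), (φ (letter (i, b))).norm = (φ (FreeGroup.of i)).norm := by
    intro i b
    have e : letter (i, true) = FreeGroup.of i := rfl
    cases b
    · have := letter_inv i true
      simp only [Bool.not_true] at this
      rw [this, map_inv, FreeGroup.norm_inv_eq, e]
    · rw [e]
  rcases r with ⟨i, x⟩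
  rcases s with ⟨j, y⟩
  rw [h, h]
  fin_cases i <;> fin_cases j
  · exact absurd rfl hrs
  · rfl
  · exact add_comm _ _
  · exact absurd rfl hrs

lemma all_good (n : ℕ) : ∀ φ : MulAut F, (φ ga).norm + (φ gb).norm = n → Good (pr φ) := by
  induction n using Nat.strong_induction_on with
  | _ n ih =>
    intro φ hn
    by_cases hmin : ∀ r s : Fin 2 × Bool, r.1 ≠ s.1 → ∀ q : F,
      (φ (letter r)).norm + (φ (letter s)).norm ≤
        (q⁻¹ * (φ (letter r) * φ (letter s)) * q).norm + (q⁻¹ * φ (letter s) * q).norm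
    · have h : IsW1 φ := isW1_of_inv φ
        ⟨symm_letter φ hmin ga (FreeGroup.norm_of 0), symm_letter φ hmin gb (FreeGroup.norm_of 1)⟩
      exact ⟨φ, h, 1, Or.inl M1.one_mem, by simp⟩
    · push Not at hmin
      obtain ⟨r, s, hrs, q, hq⟩ := hmin
      obtain ⟨ω, ω', hω', hωω, ha, hb⟩ := exists_omega r s hrs
      rw [norm_letters φ r s hrs, hn] at hq
      have hψ := ih _ hq (MulAut.conj q⁻¹ * (φ * ω * σ)) (by
        simp only [MulAut.mul_apply, MulAut.conj_apply, sigma_a, sigma_b, map_mul, ha, hb, inv_inv]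
        congr 2
        group)
      have h1 : pr (MulAut.conj q⁻¹) = 1 := by
        rw [← map_one pr, eq_comm, pr_eq_iff]
        exact ⟨q⁻¹, by simp⟩
      have h2 := good_closure ω' hω' (good_s hψ)
      have h3 : pr (MulAut.conj q⁻¹ * (φ * ω * σ)) * (pr σ)⁻¹ * pr ω' = pr φ := by
        rw [map_mul, h1, one_mul, map_mul, mul_inv_cancel_right, ← map_mul, mul_assoc, hωω, mul_one]
      rwa [h3] at h2

/-- Every automorphism of `F₂` agrees, up to conjugacy on every element, with `β ∘ φ'`
where `β` is of type (W1) and `φ'` is a chain of type (C1) or (C2). -/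
theorem stmt0 (φ : MulAut F) :
    ∃ β : MulAut F, IsW1 β ∧ ∃ φ' : MulAut F, (IsC1 φ' ∨ IsC2 φ') ∧
      ∀ w : F, IsConj (β (φ' w)) (φ w) := by
  obtain ⟨β, hβ, c, hc, h⟩ := all_good _ φ rfl
  have hc' : ∃ φ', (IsC1 φ' ∨ IsC2 φ') ∧ c = pr φ' := by
    rcases hc with hc | hc
    · obtain ⟨φ', h1, h2⟩ := chain1 c hc
      exact ⟨φ', Or.inl h1, h2⟩
    · obtain ⟨φ', h1, h2⟩ := chain2 c hc
      exact ⟨φ', Or.inr h1, h2⟩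
  obtain ⟨φ', hφ', rfl⟩ := hc'
  refine ⟨β, hβ, φ', hφ', fun w => ?_⟩
  rw [← map_mul, eq_comm, pr_eq_iff] at h
  obtain ⟨g, rfl⟩ := h
  rw [isConj_iff]
  refine ⟨β (φ' g), ?_⟩
  simp [MulAut.mul_apply]
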